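/- A finite simple 2-connected graph in which the two trivalent nodes of every theta subgraph are adjacent (a theta-complete graph) is obtained by repeated edge amalgamation (identifying an edge of one graph with an edge of another) of complete graphs and cycle graphs; conversely, any graph obtained by such edge amalgamations of complete graphs and cycles is theta-complete. -/

import Mathlib

/-!
**Amalgams are theta-complete.** In an amalgam of complete graphs and cycles, any two nonadjacent
vertices are separated by at most two further vertices (`AmalgOfCompletesAndCycles.sep`). This is
clear for complete graphs and cycles, and it survives gluing along an edge `ab`: a separation of
`u` and `v` inside one summand cannot have `a` and `b` strictly on different sides, so the other
summand can be put on one side, while vertices from different summands are separated by `a, b`.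
Three internally disjoint paths cannot all be met by two vertices, so the trivalent nodes of a
theta are adjacent.

**Theta-complete graphs are amalgams.** The induction runs over vertex sets `S` inducing a
connected subgraph without cut vertex. Suppose that `S` is not a clique.

* If `S` contains a triangle, let `X` be a maximal clique of `S` containing one. A component `D` of
  `S \ X` cannot be attached to three vertices of `X`: it would contain a branch vertex `c` joined
  to them by disjoint paths, which for every `q ∈ X` extend to a theta with trivalent nodes `c, q`.
  So `c` would be adjacent to all of `X`, against maximality.
* Otherwise let `X` be the vertex set of a shortest cycle. It has no chords, so if `X = S` the
  subgraph induced by `S` is this cycle. Else let `D` be a component of `S \ X`. Any two of its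
  attachments on the cycle are the trivalent nodes of a theta, hence adjacent; three would form a
  triangle.

Since there are no cut vertices, in both cases `D` is attached to exactly two vertices `x, y` of
`X`, and these are adjacent. So `S` is the amalgam along `xy` of `D ∪ {x, y}` and `S \ D`
(`amalg_of_attachments`). Both are proper subsets of `S`, and they have no cut vertex because
excursions of a walk to the other side can be replaced by the edge `xy` (`Conn.retract`).
-/

/-- Two-connectedness: connected, at least 3 vertices, and removing any single vertex
leaves a connected graph. -/
def TwoConnectedSG {W : Type} (G : SimpleGraph W) : Prop :=
  G.Connected ∧ 3 ≤ Nat.card W ∧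
    ∀ v : W, ((⊤ : G.Subgraph).deleteVerts {v}).coe.Connected

/-- Theta-completeness: the two trivalent nodes of any theta subgraph (three pairwise
internally disjoint, pairwise distinct paths with common endpoints) are adjacent. -/
def ThetaComplete {V : Type} (Δ : SimpleGraph V) : Prop :=
  ∀ (u v : V), u ≠ v →
    ∀ (p₁ p₂ p₃ : Δ.Walk u v), p₁.IsPath → p₂.IsPath → p₃.IsPath →
      p₁ ≠ p₂ → p₁ ≠ p₃ → p₂ ≠ p₃ →
      (∀ w : V, w ∈ p₁.support → w ∈ p₂.support → w = u ∨ w = v) →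
      (∀ w : V, w ∈ p₁.support → w ∈ p₃.support → w = u ∨ w = v) →
      (∀ w : V, w ∈ p₂.support → w ∈ p₃.support → w = u ∨ w = v) →
      Δ.Adj u v

/-- Subgraphs obtained by repeated edge amalgamation of complete subgraphs and cycles:
two pieces are glued along a common edge (their vertex sets meet in exactly the two
endpoints of a shared edge). -/
inductive AmalgOfCompletesAndCycles {V : Type} (Δ : SimpleGraph V) : Δ.Subgraph → Prop
  | complete (H : Δ.Subgraph)
      (hc : ∀ u ∈ H.verts, ∀ v ∈ H.verts, u ≠ v → H.Adj u v) :
      AmalgOfCompletesAndCycles Δ H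
  | cycle (H : Δ.Subgraph) (v : V) (c : Δ.Walk v v) (hc : c.IsCycle)
      (hH : H = c.toSubgraph) : AmalgOfCompletesAndCycles Δ H
  | amalg (H₁ H₂ : Δ.Subgraph) (a b : V)
      (h₁ : AmalgOfCompletesAndCycles Δ H₁) (h₂ : AmalgOfCompletesAndCycles Δ H₂)
      (hab : a ≠ b) (hverts : H₁.verts ∩ H₂.verts = {a, b})
      (he₁ : H₁.Adj a b) (he₂ : H₂.Adj a b) :
      AmalgOfCompletesAndCycles Δ (H₁ ⊔ H₂)

/-! ### Amalgams are theta-complete -/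

/-- `TwoSeparated H u v` says that at most two vertices, different from `u` and `v`, separate `u`
from `v` in `H`: there is a set `A` containing `u` but not `v` all of whose `H`-edges leading
outwards end in `s` or `t`. -/
def TwoSeparated {V : Type} {Δ : SimpleGraph V} (H : Δ.Subgraph) (u v : V) : Prop :=
  ∃ (A : Set V) (s t : V), u ∈ A ∧ v ∉ A ∧ v ≠ s ∧ v ≠ t ∧
    ∀ x ∈ A, ∀ y, y ∉ A → H.Adj x y → y = s ∨ y = t

/-- A separation inside one summand extends to the amalgam: the other summand lies on one side,
because the amalgamated edge `ab` cannot cross without one of its ends being a separator. -/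
lemma TwoSeparated.amalg_left {V : Type} {Δ : SimpleGraph V} {H₁ H₂ : Δ.Subgraph} {a b u v : V}
    (hverts : H₁.verts ∩ H₂.verts = {a, b}) (he₁ : H₁.Adj a b)
    (hu : u ∈ H₁.verts) (hv : v ∈ H₁.verts) (h : TwoSeparated H₁ u v) :
    TwoSeparated (H₁ ⊔ H₂) u v := by
  obtain ⟨A, s, t, huA, hvA, hvs, hvt, hA⟩ := h
  have hm : ∀ x, x ∈ H₁.verts → x ∈ H₂.verts → x = a ∨ x = b := fun x h1 h2 => by
    have : x ∈ H₁.verts ∩ H₂.verts := ⟨h1, h2⟩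
    simpa [hverts] using this
  by_cases hab : a ∈ A ∨ b ∈ A
  · refine ⟨(A ∩ H₁.verts) ∪ (H₂.verts \ {a, b}), s, t, Or.inl ⟨huA, hu⟩, ?_, hvs, hvt, ?_⟩
    · rintro (h | ⟨h, h'⟩)
      · exact hvA h.1
      · exact h' (hm v hv h)
    · intro x hx y hy hxy
      have key : y ∈ H₂.verts → y ∉ H₂.verts \ {a, b} → y ∉ A → y = s ∨ y = t := by
        intro h2 h3 h4
        have h5 : y = a ∨ y = b := by
          by_contra hc
          exact h3 ⟨h2, hc⟩
        rcases h5 with rfl | rfl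
        · exact hA b (hab.resolve_left h4) _ h4 he₁.symm
        · exact hA a (hab.resolve_right h4) _ h4 he₁
      have hab1 : a ∈ H₁.verts ∧ b ∈ H₁.verts := ⟨H₁.edge_vert he₁, H₁.edge_vert he₁.symm⟩
      have hy1 : y ∈ H₁.verts → y ∉ A := fun h h' => hy (Or.inl ⟨h', h⟩)
      have hy2 : y ∉ H₂.verts \ {a, b} := fun h => hy (Or.inr h)
      rcases hxy with hxy | hxy
      · have y1 := H₁.edge_vert hxy.symm
        rcases hx with hx | hx
        · exact hA x hx.1 y (hy1 y1) hxy
        · exact absurd (hm x (H₁.edge_vert hxy) hx.1) hx.2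
      · have y2 := H₂.edge_vert hxy.symm
        refine key y2 hy2 (hy1 ?_)
        have : y = a ∨ y = b := by
          by_contra hc
          exact hy2 ⟨y2, hc⟩
        rcases this with rfl | rfl
        exacts [hab1.1, hab1.2]
  · push Not at hab
    refine ⟨A ∩ H₁.verts, s, t, ⟨huA, hu⟩, fun h => hvA h.1, hvs, hvt, ?_⟩
    intro x hx y hy hxy
    rcases hxy with hxy | hxy
    · exact hA x hx.1 y (fun h => hy ⟨h, H₁.edge_vert hxy.symm⟩) hxy
    · rcases hm x hx.2 (H₂.edge_vert hxy) with rfl | rfl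
      exacts [absurd hx.1 hab.1, absurd hx.1 hab.2]

lemma TwoSeparated.amalg_cross {V : Type} {Δ : SimpleGraph V} {H₁ H₂ : Δ.Subgraph} {a b u v : V}
    (hverts : H₁.verts ∩ H₂.verts = {a, b})
    (hu : u ∈ H₁.verts) (hu' : u ∉ H₂.verts) (hv' : v ∉ H₁.verts) :
    TwoSeparated (H₁ ⊔ H₂) u v := by
  have hm : ∀ x, (x = a ∨ x = b) ↔ x ∈ H₁.verts ∧ x ∈ H₂.verts := fun x => by
    have : x ∈ H₁.verts ∩ H₂.verts ↔ x ∈ ({a, b} : Set V) := by rw [hverts]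
    simpa using this.symm
  refine ⟨H₁.verts \ {a, b}, a, b, ⟨hu, fun h => hu' ((hm u).1 h).2⟩, fun h => hv' h.1,
    fun h => hv' ((hm v).1 (Or.inl h)).1, fun h => hv' ((hm v).1 (Or.inr h)).1, ?_⟩
  intro x hx y hy hxy
  rcases hxy with hxy | hxy
  · by_contra hc
    exact hy ⟨H₁.edge_vert hxy.symm, hc⟩
  · exact absurd ((hm x).2 ⟨hx.1, H₂.edge_vert hxy⟩) hx.2

/-- In an amalgam, nonadjacent vertices are separated by at most two vertices; this is where
completes and cycles enter: the former have no nonadjacent vertices, and in the latter the two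
neighbours of `u` separate it from everything else. -/
lemma AmalgOfCompletesAndCycles.sep {V : Type} {Δ : SimpleGraph V} {H : Δ.Subgraph}
    (hH : AmalgOfCompletesAndCycles Δ H) :
    ∀ u ∈ H.verts, ∀ v ∈ H.verts, u ≠ v → ¬ H.Adj u v → TwoSeparated H u v := by
  induction hH with
  | complete H hc => exact fun u hu v hv huv hn => absurd (hc u hu v hv huv) hn
  | cycle H w c hc hH =>
    subst hH
    intro u hu v hv huv hn
    have h2 := hc.ncard_neighborSet_toSubgraph_eq_two (by simpa using hu)
    obtain ⟨s, t, -, hst⟩ := Set.ncard_eq_two.1 h2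
    have hm : ∀ y, c.toSubgraph.Adj u y ↔ y = s ∨ y = t := fun y => by
      have : y ∈ c.toSubgraph.neighborSet u ↔ y ∈ ({s, t} : Set V) := by rw [hst]
      simpa using this
    refine ⟨{u}, s, t, rfl, fun h => huv h.symm, fun h => hn ((hm v).2 (Or.inl h)),
      fun h => hn ((hm v).2 (Or.inr h)), ?_⟩
    rintro x rfl y - hxy
    exact (hm y).1 hxy
  | amalg H₁ H₂ a b h₁ h₂ hab hverts he₁ he₂ ih₁ ih₂ =>
    intro u hu v hv huv hn
    have hn1 : ¬ H₁.Adj u v := fun h => hn (Or.inl h)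
    have hn2 : ¬ H₂.Adj u v := fun h => hn (Or.inr h)
    have hverts' : H₂.verts ∩ H₁.verts = {a, b} := by rw [Set.inter_comm, hverts]
    by_cases hu1 : u ∈ H₁.verts <;> by_cases hv1 : v ∈ H₁.verts
    · exact (ih₁ u hu1 v hv1 huv hn1).amalg_left hverts he₁ hu1 hv1
    · have hv2 : v ∈ H₂.verts := hv.resolve_left hv1
      by_cases hu2 : u ∈ H₂.verts
      · rw [sup_comm]
        exact (ih₂ u hu2 v hv2 huv hn2).amalg_left hverts' he₂ hu2 hv2
      · exact TwoSeparated.amalg_cross hverts hu1 hu2 hv1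
    · have hu2 : u ∈ H₂.verts := hu.resolve_left hu1
      rw [sup_comm]
      by_cases hv2 : v ∈ H₂.verts
      · exact (ih₂ u hu2 v hv2 huv hn2).amalg_left hverts' he₂ hu2 hv2
      · exact TwoSeparated.amalg_cross hverts' hu2 hu1 hv2
    · have hu2 : u ∈ H₂.verts := hu.resolve_left hu1
      have hv2 : v ∈ H₂.verts := hv.resolve_left hv1
      rw [sup_comm]
      exact (ih₂ u hu2 v hv2 huv hn2).amalg_left hverts' he₂ hu2 hv2

/-- Three internally disjoint paths cannot all pass through two separating vertices. -/
lemma AmalgOfCompletesAndCycles.thetaComplete {V : Type} {Δ : SimpleGraph V}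
    (h : AmalgOfCompletesAndCycles Δ (⊤ : Δ.Subgraph)) : ThetaComplete Δ := by
  intro u v huv p₁ p₂ p₃ _ _ _ _ _ _ h12 h13 h23
  by_contra hn
  obtain ⟨A, s, t, hu, hv, hvs, hvt, hA⟩ := h.sep u trivial v trivial huv (by simpa using hn)
  have key : ∀ p : Δ.Walk u v, ∃ y, y ∉ A ∧ y ∈ p.support ∧ (y = s ∨ y = t) := by
    intro p
    obtain ⟨d, hd, hd1, hd2⟩ := p.exists_boundary_dart A hu hv
    exact ⟨d.snd, hd2, p.dart_snd_mem_support_of_mem_darts hd,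
      hA _ hd1 _ hd2 (by simp)⟩
  obtain ⟨y₁, m₁, k₁, e₁⟩ := key p₁
  obtain ⟨y₂, m₂, k₂, e₂⟩ := key p₂
  obtain ⟨y₃, m₃, k₃, e₃⟩ := key p₃
  have fin : ∀ y, y ∉ A → (y = s ∨ y = t) → (y = u ∨ y = v) → False := by
    rintro y hy h1 (rfl | rfl)
    · exact hy hu
    · rcases h1 with h1 | h1
      exacts [hvs h1, hvt h1]
  have : y₁ = y₂ ∨ y₁ = y₃ ∨ y₂ = y₃ := by
    rcases e₁ with rfl | rfl <;> rcases e₂ with rfl | rfl <;> rcases e₃ with rfl | rfl <;> simp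
  rcases this with rfl | rfl | rfl
  · exact fin _ m₁ e₁ (h12 _ k₁ k₂)
  · exact fin _ m₁ e₁ (h13 _ k₁ k₃)
  · exact fin _ m₂ e₂ (h23 _ k₂ k₃)

/-! ### Connections inside vertex sets -/

/-- `Conn Δ A x y`: some walk of `Δ` from `x` to `y` has all its vertices (ends included) in `A`. -/
def Conn {V : Type} (Δ : SimpleGraph V) (A : Set V) (x y : V) : Prop :=
  ∃ p : Δ.Walk x y, ∀ w ∈ p.support, w ∈ A

namespace Conn

variable {V : Type} {Δ : SimpleGraph V} {A B : Set V} {x y z : V}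

lemma left_mem (h : Conn Δ A x y) : x ∈ A := by
  obtain ⟨p, hp⟩ := h
  exact hp _ p.start_mem_support

lemma right_mem (h : Conn Δ A x y) : y ∈ A := by
  obtain ⟨p, hp⟩ := h
  exact hp _ p.end_mem_support

lemma refl (hx : x ∈ A) : Conn Δ A x x := ⟨.nil, by simpa using hx⟩

lemma of_adj (h : Δ.Adj x y) (hx : x ∈ A) (hy : y ∈ A) : Conn Δ A x y :=
  ⟨h.toWalk, by simp [hx, hy]⟩

lemma symm (h : Conn Δ A x y) : Conn Δ A y x := by
  obtain ⟨p, hp⟩ := h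
  exact ⟨p.reverse, by simpa using hp⟩

lemma trans (h : Conn Δ A x y) (h' : Conn Δ A y z) : Conn Δ A x z := by
  obtain ⟨p, hp⟩ := h
  obtain ⟨q, hq⟩ := h'
  refine ⟨p.append q, fun w hw => ?_⟩
  rw [SimpleGraph.Walk.mem_support_append_iff] at hw
  exact hw.elim (hp w) (hq w)

lemma mono (hAB : A ⊆ B) (h : Conn Δ A x y) : Conn Δ B x y := by
  obtain ⟨p, hp⟩ := h
  exact ⟨p, fun w hw => hAB (hp w hw)⟩

lemma exists_path (h : Conn Δ A x y) : ∃ p : Δ.Walk x y, p.IsPath ∧ ∀ w ∈ p.support, w ∈ A := by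
  classical
  obtain ⟨p, hp⟩ := h
  exact ⟨p.bypass, p.bypass_isPath, fun w hw => hp w (p.support_bypass_subset_support hw)⟩

lemma exists_boundary {S : Set V} (h : Conn Δ A x y) (hx : x ∈ S) (hy : y ∉ S) :
    ∃ a b, a ∈ S ∧ b ∉ S ∧ a ∈ A ∧ b ∈ A ∧ Δ.Adj a b := by
  obtain ⟨p, hp⟩ := h
  obtain ⟨d, hd, h1, h2⟩ := p.exists_boundary_dart S hx hy
  exact ⟨d.fst, d.snd, h1, h2, hp _ (p.dart_fst_mem_support_of_mem_darts hd),
    hp _ (p.dart_snd_mem_support_of_mem_darts hd), d.adj⟩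

end Conn

/-- Theta-completeness with the three paths of a theta replaced by connections through three
pairwise disjoint sets. -/
lemma ThetaComplete.adj {V : Type} {Δ : SimpleGraph V} (hΔ : ThetaComplete Δ) {u v : V}
    (huv : u ≠ v) {A B C : Set V} (hAB : Disjoint A B) (hAC : Disjoint A C) (hBC : Disjoint B C)
    (hA : Conn Δ (A ∪ {u, v}) u v) (hB : Conn Δ (B ∪ {u, v}) u v)
    (hC : Conn Δ (C ∪ {u, v}) u v) : Δ.Adj u v := by
  obtain ⟨p, hp, hpA⟩ := hA.exists_path
  obtain ⟨q, hq, hqB⟩ := hB.exists_path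
  obtain ⟨r, hr, hrC⟩ := hC.exists_path
  have key : ∀ {X Y : Set V} {p q : Δ.Walk u v}, Disjoint X Y →
      (∀ w ∈ p.support, w ∈ X ∪ {u, v}) → (∀ w ∈ q.support, w ∈ Y ∪ {u, v}) →
      ∀ w, w ∈ p.support → w ∈ q.support → w = u ∨ w = v := by
    intro X Y p q hXY hp hq w hwp hwq
    rcases hp w hwp with h | h
    · rcases hq w hwq with h' | h'
      · exact absurd h' (Set.disjoint_left.1 hXY h)
      · exact h'
    · exact h
  -- Two of the paths can only coincide if both of them are the edge `uv`.
  have triv : ∀ {p : Δ.Walk u v}, p.IsPath →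
      (∀ w, w ∈ p.support → w ∈ p.support → w = u ∨ w = v) → Δ.Adj u v := by
    intro p hp h
    cases p with
    | nil => exact absurd rfl huv
    | cons hadj p' =>
      rename_i y
      rcases h y (by simp) (by simp) with rfl | rfl
      · exact absurd hadj (Δ.irrefl)
      · exact hadj
  have hpq := key hAB hpA hqB
  have hpr := key hAC hpA hrC
  have hqr := key hBC hqB hrC
  by_cases h1 : p = q
  · subst h1; exact triv hp hpq
  by_cases h2 : p = r
  · subst h2; exact triv hp hpr
  by_cases h3 : q = r
  · subst h3; exact triv hq hqr
  exact hΔ u v huv p q r hp hq hr h1 h2 h3 hpq hpr hqr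

/-- Initial piece of a walk up to its first vertex in `T`. -/
lemma exists_first_hit {V : Type} {Δ : SimpleGraph V} {T : Set V} {x y : V} (r : Δ.Walk x y)
    (hy : y ∈ T) : ∃ c ∈ T, ∃ r' : Δ.Walk x c,
      (∀ w ∈ r'.support, w ∈ r.support) ∧ ∀ w ∈ r'.support, w ∈ T → w = c := by
  induction r with
  | nil => exact ⟨_, hy, .nil, by simp, by simp⟩
  | @cons u v w h p ih =>
    by_cases hu : u ∈ T
    · exact ⟨u, hu, .nil, by simp, by simp⟩
    · obtain ⟨c, hc, r', h1, h2⟩ := ih hy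
      refine ⟨c, hc, .cons h r', ?_, ?_⟩
      · intro w hw
        rw [SimpleGraph.Walk.support_cons, List.mem_cons] at hw ⊢
        exact hw.imp id (h1 w)
      · intro w hw hwT
        rw [SimpleGraph.Walk.support_cons, List.mem_cons] at hw
        rcases hw with rfl | hw
        exacts [absurd hwT hu, h2 w hw hwT]

/-- In a connected set `D` some vertex `c` reaches three given vertices of `D` by paths which
pairwise share only `c` (the branch vertex of a tree spanned by them). -/
lemma exists_branch {V : Type} {Δ : SimpleGraph V} {D : Set V}
    (hD : ∀ x ∈ D, ∀ y ∈ D, Conn Δ D x y) {d₁ d₂ d₃ : V} (h₁ : d₁ ∈ D) (h₂ : d₂ ∈ D)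
    (h₃ : d₃ ∈ D) : ∃ c ∈ D, ∃ A₁ A₂ A₃ : Set V, A₁ ⊆ D ∧ A₂ ⊆ D ∧ A₃ ⊆ D ∧
      Disjoint A₁ A₂ ∧ Disjoint A₁ A₃ ∧ Disjoint A₂ A₃ ∧
      Conn Δ (A₁ ∪ {c}) c d₁ ∧ Conn Δ (A₂ ∪ {c}) c d₂ ∧ Conn Δ (A₃ ∪ {c}) c d₃ := by
  obtain ⟨p, hp, hpD⟩ := (hD d₁ h₁ d₂ h₂).exists_path
  obtain ⟨r, hrD⟩ := hD d₃ h₃ d₁ h₁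
  obtain ⟨c, hc, r', hr', hr'p⟩ :=
    exists_first_hit (T := {w | w ∈ p.support}) r p.start_mem_support
  obtain ⟨a, b, rfl⟩ := SimpleGraph.Walk.mem_support_iff_exists_append.1 hc
  have hab : ∀ w, w ∈ a.support → w ∈ b.support → w = c := by
    intro w hwa hwb
    have hn := hp.support_nodup
    rw [SimpleGraph.Walk.support_append] at hn
    by_contra hwc
    rw [← b.cons_tail_support, List.mem_cons] at hwb
    exact (List.disjoint_of_nodup_append hn) hwa (hwb.resolve_left hwc)
  have hm : ∀ w, w ∈ (a.append b).support ↔ w ∈ a.support ∨ w ∈ b.support := fun w =>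
    SimpleGraph.Walk.mem_support_append_iff a b
  refine ⟨c, hpD c hc, {w | w ∈ a.support} \ {c}, {w | w ∈ b.support} \ {c},
    {w | w ∈ r'.support} \ {c}, ?_, ?_, ?_, ?_, ?_, ?_, ?_, ?_, ?_⟩
  · exact fun w hw => hpD w ((hm w).2 (Or.inl hw.1))
  · exact fun w hw => hpD w ((hm w).2 (Or.inr hw.1))
  · exact fun w hw => hrD w (hr' w hw.1)
  · exact Set.disjoint_left.2 fun w h h' => h.2 (hab w h.1 h'.1)
  · exact Set.disjoint_left.2 fun w h h' => h.2 (hr'p w h'.1 ((hm w).2 (Or.inl h.1)))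
  · exact Set.disjoint_left.2 fun w h h' => h.2 (hr'p w h'.1 ((hm w).2 (Or.inr h.1)))
  · exact ⟨a.reverse, fun w hw => by simp at hw ⊢; tauto⟩
  · exact ⟨b, fun w hw => by simp; tauto⟩
  · exact ⟨r'.reverse, fun w hw => by simp at hw ⊢; tauto⟩

/-- Two distinct vertices of a cycle cut it into two internally disjoint paths. -/
lemma SimpleGraph.Walk.IsCycle.exists_arcs {V : Type} {Δ : SimpleGraph V} {v x y : V}
    {c : Δ.Walk v v} (hc : c.IsCycle) (hx : x ∈ c.support) (hy : y ∈ c.support) (hxy : x ≠ y) :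
    ∃ (q : Δ.Walk x y) (r : Δ.Walk y x), q.IsPath ∧ r.IsPath ∧
      (∀ w, w ∈ q.support → w ∈ r.support → w = x ∨ w = y) ∧
      q.length + r.length = c.length ∧
      (∀ w, w ∈ c.support ↔ w ∈ q.support ∨ w ∈ r.support) ∧
      (∀ e, e ∈ c.edges ↔ e ∈ q.edges ∨ e ∈ r.edges) := by
  classical
  have hc' := hc.rotate hx
  have hy' : y ∈ (c.rotate x hx).support := (c.mem_support_rotate_iff x hx).2 hy
  obtain ⟨q, r, hqr⟩ := SimpleGraph.Walk.mem_support_iff_exists_append.1 hy'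
  have hq0 : ¬ q.Nil := fun h => hxy h.eq
  have hr0 : ¬ r.Nil := fun h => hxy h.eq.symm
  have hlen := c.length_rotate x hx
  have hsup : ∀ w, w ∈ c.support ↔ w ∈ (c.rotate x hx).support := fun w =>
    (c.mem_support_rotate_iff x hx).symm
  have hedg : ∀ e, e ∈ c.edges ↔ e ∈ (c.rotate x hx).edges := fun e =>
    (c.rotate_edges x hx).mem_iff.symm
  rw [hqr] at hc' hlen
  refine ⟨q, r, hc'.isPath_of_append_left hr0, hc'.isPath_of_append_right hq0, ?_, ?_, ?_, ?_⟩
  · intro w hwq hwr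
    have hn := hc'.support_nodup
    rw [SimpleGraph.Walk.tail_support_append] at hn
    rw [← SimpleGraph.Walk.cons_tail_support, List.mem_cons] at hwq hwr
    by_contra hcon
    push Not at hcon
    exact (List.disjoint_of_nodup_append hn) (hwq.resolve_left hcon.1) (hwr.resolve_left hcon.2)
  · rw [← hlen, SimpleGraph.Walk.length_append]
  · intro w
    rw [hsup, hqr, SimpleGraph.Walk.mem_support_append_iff]
  · intro e
    rw [hedg, hqr, SimpleGraph.Walk.edges_append, List.mem_append]

/-! ### Splitting along an edge -/

/-- `S` induces a connected subgraph without cut vertex. Unlike in `TwoConnectedSG` no lower bound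
on the size of `S` is imposed. -/
def NoCutVertexOn {V : Type} (Δ : SimpleGraph V) (S : Set V) : Prop :=
  (∀ x ∈ S, ∀ y ∈ S, Conn Δ S x y) ∧
    ∀ z ∈ S, ∀ x ∈ S, ∀ y ∈ S, x ≠ z → y ≠ z → Conn Δ (S \ {z}) x y

/-- If `S₁` can be left within `S` only through the ends of an edge `xy` of `S₁`, then every walk
in `S` between vertices of `S₁` can be shortened to one in `S₁`, replacing excursions by `xy`. -/
lemma Conn.retract {V : Type} {Δ : SimpleGraph V} {S S₁ T : Set V} {x y : V} (hTS : T ⊆ S)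
    (hx : x ∈ S₁) (hy : y ∈ S₁) (hxy : Δ.Adj x y)
    (hcl : ∀ p ∈ S₁, ∀ q ∈ S, q ∉ S₁ → Δ.Adj p q → p = x ∨ p = y) {p q : V}
    (h : Conn Δ T p q) (hp : p ∈ S₁) (hq : q ∈ S₁) : Conn Δ (S₁ ∩ T) p q := by
  obtain ⟨r, hr⟩ := h
  -- A walk starting outside `S₁` is only controlled from its first return to `x` or `y` on.
  have key : (p ∈ S₁ → Conn Δ (S₁ ∩ T) p q) ∧
      (p ∉ S₁ → ∃ e, (e = x ∨ e = y) ∧ Conn Δ (S₁ ∩ T) e q) := by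
    clear hp
    induction r with
    | nil => exact ⟨fun h => .refl ⟨h, hr _ (by simp)⟩, fun h => absurd hq h⟩
    | @cons u v w huv r ih =>
      have huT : u ∈ T := hr u (by simp)
      have hvT : v ∈ T := hr v (by simp)
      obtain ⟨ih1, ih2⟩ := ih hq (fun w hw => hr w (by simp [hw]))
      constructor
      · intro hu
        by_cases hv : v ∈ S₁
        · exact (Conn.of_adj (A := S₁ ∩ T) huv ⟨hu, huT⟩ (ih1 hv).left_mem).trans (ih1 hv)
        · obtain ⟨e, he, hc⟩ := ih2 hv
          have heT := hc.left_mem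
          rcases hcl u hu v (hTS hvT) hv huv with rfl | rfl <;> rcases he with rfl | rfl
          · exact hc
          · exact (Conn.of_adj (A := S₁ ∩ T) hxy ⟨hu, huT⟩ heT).trans hc
          · exact (Conn.of_adj (A := S₁ ∩ T) hxy.symm ⟨hu, huT⟩ heT).trans hc
          · exact hc
      · intro hu
        by_cases hv : v ∈ S₁
        · exact ⟨v, hcl v hv u (hTS huT) hu huv.symm, ih1 hv⟩
        · exact ih2 hv
  exact key.1 hp

lemma NoCutVertexOn.retract {V : Type} {Δ : SimpleGraph V} {S S₁ : Set V} {x y : V}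
    (hS : NoCutVertexOn Δ S) (h₁ : S₁ ⊆ S) (hx : x ∈ S₁) (hy : y ∈ S₁) (hxy : Δ.Adj x y)
    (hcl : ∀ p ∈ S₁, ∀ q ∈ S, q ∉ S₁ → Δ.Adj p q → p = x ∨ p = y) : NoCutVertexOn Δ S₁ := by
  constructor
  · intro a ha b hb
    exact ((hS.1 a (h₁ ha) b (h₁ hb)).retract le_rfl hx hy hxy hcl ha hb).mono
      Set.inter_subset_left
  · intro z hz a ha b hb haz hbz
    exact ((hS.2 z (h₁ hz) a (h₁ ha) b (h₁ hb) haz hbz).retract Set.sdiff_subset hx hy hxy hcl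
      ha hb).mono fun w hw => ⟨hw.1, hw.2.2⟩

/-- The inductive step: `S` splits along an edge if for each connected part `D` of the complement
of `X` in `S`, the vertices of `X` adjacent to `D` are pairwise adjacent and at most two. That
there are at least two of them is the absence of cut vertices. -/
lemma amalg_of_attachments {V : Type} {Δ : SimpleGraph V} {S X : Set V}
    (hS : NoCutVertexOn Δ S)
    (ih : ∀ S', S' ⊂ S → NoCutVertexOn Δ S' →
      AmalgOfCompletesAndCycles Δ ((⊤ : Δ.Subgraph).induce S'))
    (hXS : X ⊆ S) (hne : X ≠ S) (hX3 : ∀ x y, ∃ z ∈ X, z ≠ x ∧ z ≠ y)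
    (hX : ∀ D : Set V, D ⊆ S \ X → (∀ x ∈ D, ∀ y ∈ D, Conn Δ D x y) →
      (∀ q₁ ∈ X, ∀ q₂ ∈ X, q₁ ≠ q₂ → (∃ d ∈ D, Δ.Adj d q₁) → (∃ d ∈ D, Δ.Adj d q₂) →
        Δ.Adj q₁ q₂) ∧
      ∀ q₁ ∈ X, ∀ q₂ ∈ X, ∀ q₃ ∈ X, q₁ ≠ q₂ → q₁ ≠ q₃ → q₂ ≠ q₃ → (∃ d ∈ D, Δ.Adj d q₁) →
        (∃ d ∈ D, Δ.Adj d q₂) → (∃ d ∈ D, Δ.Adj d q₃) → False) :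
    AmalgOfCompletesAndCycles Δ ((⊤ : Δ.Subgraph).induce S) := by
  obtain ⟨d, hdS, hdX⟩ : ∃ d ∈ S, d ∉ X := by
    by_contra hc
    push Not at hc
    exact hne (hXS.antisymm hc)
  set D : Set V := {w | Conn Δ (S \ X) d w} with hDdef
  have hdD : d ∈ D := Conn.refl ⟨hdS, hdX⟩
  have hDX : D ⊆ S \ X := fun w hw => hw.right_mem
  have hDconn' : ∀ x ∈ D, Conn Δ D d x := by
    classical
    rintro x ⟨p, hp⟩
    refine ⟨p, fun w hw => ⟨p.takeUntil w hw, fun z hz => hp z ?_⟩⟩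
    exact p.support_takeUntil_subset_support hw hz
  have hDconn : ∀ x ∈ D, ∀ y ∈ D, Conn Δ D x y := fun x hx y hy =>
    (hDconn' x hx).symm.trans (hDconn' y hy)
  have hDcl : ∀ p ∈ D, ∀ q ∈ S, q ∉ D → Δ.Adj p q → q ∈ X := by
    intro p hp q hq hqD hpq
    by_contra hqX
    exact hqD (hp.trans (Conn.of_adj hpq (hDX hp) ⟨hq, hqX⟩))
  obtain ⟨hadj, h3⟩ := hX D hDX hDconn
  have hatt : ∀ z ∈ X, ∃ q ∈ X, q ≠ z ∧ ∃ d ∈ D, Δ.Adj d q := by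
    intro z hz
    obtain ⟨q, hq, hqz, -⟩ := hX3 z z
    have hdz : d ≠ z := fun h => hdX (h ▸ hz)
    obtain ⟨a, b, ha, hb, -, hb', hab⟩ :=
      (hS.2 z (hXS hz) d hdS q (hXS hq) hdz hqz).exists_boundary hdD (fun h => (hDX h).2 hq)
    exact ⟨b, hDcl a ha b hb'.1 hb hab, hb'.2, a, ha, hab⟩
  obtain ⟨z, hz, -⟩ := hX3 d d
  obtain ⟨x, hxX, -, hxD⟩ := hatt z hz
  obtain ⟨y, hyX, hyx, hyD⟩ := hatt x hxX
  have hxy : Δ.Adj x y := hadj x hxX y hyX hyx.symm hxD hyD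
  have hxnD : x ∉ D := fun h => (hDX h).2 hxX
  have hynD : y ∉ D := fun h => (hDX h).2 hyX
  have hDout : ∀ p ∈ D, ∀ q ∈ S, q ∉ D → Δ.Adj p q → q = x ∨ q = y := by
    intro p hp q hq hqD hpq
    by_contra hc
    push Not at hc
    exact h3 x hxX y hyX q (hDcl p hp q hq hqD hpq) hyx.symm hc.1.symm hc.2.symm hxD hyD
      ⟨p, hp, hpq⟩
  obtain ⟨t, htX, htx, hty⟩ := hX3 x y
  have htD : t ∉ D := fun h => (hDX h).2 htX
  have hxS := hXS hxX
  have hyS := hXS hyX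
  have hS1 : D ∪ {x, y} ⊆ S := by
    rintro w (hw | rfl | rfl)
    exacts [(hDX hw).1, hxS, hyS]
  have g1 := ih (D ∪ {x, y})
    ⟨hS1, fun h => by
      rcases h (hXS htX) with h | h | h
      exacts [htD h, htx h, hty h]⟩
    (hS.retract hS1 (Or.inr (Or.inl rfl)) (Or.inr (Or.inr rfl)) hxy (by
      rintro p (hp | hp) q hq hq' hpq
      · exact absurd (hDout p hp q hq (fun h => hq' (Or.inl h)) hpq) (fun h => hq' (Or.inr h))
      · exact hp))
  have g2 := ih (S \ D)
    ⟨Set.sdiff_subset, fun h => (h hdS).2 hdD⟩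
    (hS.retract Set.sdiff_subset ⟨hxS, hxnD⟩ ⟨hyS, hynD⟩ hxy (by
      intro p hp q hq hq' hpq
      have hqD : q ∈ D := by
        by_contra h
        exact hq' ⟨hq, h⟩
      exact hDout q hqD p hp.1 hp.2 hpq.symm))
  have := AmalgOfCompletesAndCycles.amalg _ _ x y g1 g2 hyx.symm
    (by
      ext w
      constructor
      · rintro ⟨hw | hw, hw'⟩
        exacts [absurd hw hw'.2, hw]
      · rintro (rfl | rfl)
        exacts [⟨Or.inr (Or.inl rfl), hxS, hxnD⟩, ⟨Or.inr (Or.inr rfl), hyS, hynD⟩])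
    ⟨Or.inr (Or.inl rfl), Or.inr (Or.inr rfl), hxy⟩ ⟨⟨hxS, hxnD⟩, ⟨hyS, hynD⟩, hxy⟩
  convert this using 1
  refine SimpleGraph.Subgraph.ext ?_ ?_
  · ext w
    change w ∈ S ↔ w ∈ D ∪ {x, y} ∨ w ∈ S \ D
    constructor
    · intro hw
      by_cases h : w ∈ D
      exacts [Or.inl (Or.inl h), Or.inr ⟨hw, h⟩]
    · rintro (hw | hw)
      exacts [hS1 hw, hw.1]
  · ext a b
    change (a ∈ S ∧ b ∈ S ∧ Δ.Adj a b) ↔ (a ∈ D ∪ {x, y} ∧ b ∈ D ∪ {x, y} ∧ Δ.Adj a b) ∨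
      (a ∈ S \ D ∧ b ∈ S \ D ∧ Δ.Adj a b)
    constructor
    · rintro ⟨ha, hb, hab⟩
      by_cases haD : a ∈ D <;> by_cases hbD : b ∈ D
      · exact Or.inl ⟨Or.inl haD, Or.inl hbD, hab⟩
      · exact Or.inl ⟨Or.inl haD, Or.inr (hDout a haD b hb hbD hab), hab⟩
      · exact Or.inl ⟨Or.inr (hDout b hbD a ha haD hab.symm), Or.inl hbD, hab⟩
      · exact Or.inr ⟨⟨ha, haD⟩, ⟨hb, hbD⟩, hab⟩
    · rintro (⟨ha, hb, hab⟩ | ⟨ha, hb, hab⟩)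
      exacts [⟨hS1 ha, hS1 hb, hab⟩, ⟨ha.1, hb.1, hab⟩]

/-! ### Thetas from attachments of a connected set -/

/-- A connected set attached to three vertices of a clique outside it contains a vertex adjacent
to the whole clique, by theta-completeness: a branch vertex `c` and any clique vertex `q` are the
trivalent nodes of a theta. -/
lemma ThetaComplete.exists_adj_clique {V : Type} {Δ : SimpleGraph V} (hΔ : ThetaComplete Δ)
    {X D : Set V} (hX : Δ.IsClique X) (hXD : Disjoint D X)
    (hD : ∀ x ∈ D, ∀ y ∈ D, Conn Δ D x y) {q₁ q₂ q₃ : V} (hq₁ : q₁ ∈ X) (hq₂ : q₂ ∈ X)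
    (hq₃ : q₃ ∈ X) (h₁₂ : q₁ ≠ q₂) (h₁₃ : q₁ ≠ q₃) (h₂₃ : q₂ ≠ q₃)
    (h₁ : ∃ d ∈ D, Δ.Adj d q₁) (h₂ : ∃ d ∈ D, Δ.Adj d q₂) (h₃ : ∃ d ∈ D, Δ.Adj d q₃) :
    ∃ c ∈ D, ∀ q ∈ X, Δ.Adj c q := by
  obtain ⟨d₁, hd₁, e₁⟩ := h₁
  obtain ⟨d₂, hd₂, e₂⟩ := h₂
  obtain ⟨d₃, hd₃, e₃⟩ := h₃
  obtain ⟨c, hc, A₁, A₂, A₃, hA₁, hA₂, hA₃, h12, h13, h23, p₁, p₂, p₃⟩ :=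
    exists_branch hD hd₁ hd₂ hd₃
  have hDX : ∀ w ∈ D, w ∉ X := fun w hw => Set.disjoint_left.1 hXD hw
  refine ⟨c, hc, fun q hq => ?_⟩
  have leg : ∀ {A : Set V} {d p : V}, Conn Δ (A ∪ {c}) c d → Δ.Adj d p → p ∈ X →
      Conn Δ ((A ∪ {p}) ∪ {c, q}) c q := by
    intro A d p hA hdp hp
    have s1 : Conn Δ ((A ∪ {p}) ∪ {c, q}) c d := hA.mono (by
      rintro w (hw | rfl)
      exacts [Or.inl (Or.inl hw), Or.inr (Or.inl rfl)])
    have s2 := s1.trans (.of_adj hdp s1.right_mem (Or.inl (Or.inr rfl)))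
    by_cases hpq : p = q
    · rwa [hpq] at s2 ⊢
    · exact s2.trans (.of_adj (hX hp hq hpq) s2.right_mem (Or.inr (Or.inr rfl)))
  have dis : ∀ {A B : Set V} {p p' : V}, A ⊆ D → B ⊆ D → Disjoint A B → p ∈ X → p' ∈ X →
      p ≠ p' → Disjoint (A ∪ {p}) (B ∪ {p'}) := by
    intro A B p p' hA hB hAB hp hp' hpp
    rw [Set.disjoint_left]
    rintro w (hw | rfl) (hw' | h)
    · exact Set.disjoint_left.1 hAB hw hw'
    · exact hDX w (hA hw) (h ▸ hp')
    · exact hDX w (hB hw') hp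
    · exact hpp h
  exact hΔ.adj (fun h => hDX c hc (h ▸ hq)) (dis hA₁ hA₂ h12 hq₁ hq₂ h₁₂)
    (dis hA₁ hA₃ h13 hq₁ hq₃ h₁₃) (dis hA₂ hA₃ h23 hq₂ hq₃ h₂₃)
    (leg p₁ e₁ hq₁) (leg p₂ e₂ hq₂) (leg p₃ e₃ hq₃)

/-- Two vertices of a cycle attached to a common connected set outside it are trivalent nodes of
a theta. -/
lemma ThetaComplete.adj_of_isCycle {V : Type} {Δ : SimpleGraph V} (hΔ : ThetaComplete Δ)
    {v : V} {c : Δ.Walk v v} (hc : c.IsCycle) {D : Set V} (hcD : ∀ w ∈ D, w ∉ c.support)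
    (hD : ∀ x ∈ D, ∀ y ∈ D, Conn Δ D x y) {x y : V} (hx : x ∈ c.support) (hy : y ∈ c.support)
    (hxy : x ≠ y) (h₁ : ∃ d ∈ D, Δ.Adj d x) (h₂ : ∃ d ∈ D, Δ.Adj d y) : Δ.Adj x y := by
  obtain ⟨d₁, hd₁, e₁⟩ := h₁
  obtain ⟨d₂, hd₂, e₂⟩ := h₂
  obtain ⟨q, r, -, -, hqr, -, hs, -⟩ := hc.exists_arcs hx hy hxy
  refine hΔ.adj hxy (A := {w | w ∈ q.support} \ {x, y}) (B := {w | w ∈ r.support} \ {x, y})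
    (C := D) ?_ ?_ ?_ ?_ ?_ ?_
  · exact Set.disjoint_left.2 fun w hw hw' => hw.2 (hqr w hw.1 hw'.1)
  · exact Set.disjoint_left.2 fun w hw hw' => hcD w hw' ((hs w).2 (Or.inl hw.1))
  · exact Set.disjoint_left.2 fun w hw hw' => hcD w hw' ((hs w).2 (Or.inr hw.1))
  · exact ⟨q, fun w hw => by simp; tauto⟩
  · exact ⟨r.reverse, fun w hw => by simp at hw ⊢; tauto⟩
  · have hm : Conn Δ (D ∪ {x, y}) d₁ d₂ := (hD d₁ hd₁ d₂ hd₂).mono Set.subset_union_left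
    exact ((Conn.of_adj e₁.symm (Or.inr (Or.inl rfl)) (Or.inl hd₁)).trans hm).trans
      (.of_adj e₂ (Or.inl hd₂) (Or.inr (Or.inr rfl)))

/-! ### Shortest cycles -/

/-- A connected set without cut vertex which is not a clique contains a cycle. -/
lemma NoCutVertexOn.exists_isCycle {V : Type} {Δ : SimpleGraph V} {S : Set V}
    (hS : NoCutVertexOn Δ S) (hn : ¬ Δ.IsClique S) :
    ∃ (v : V) (c : Δ.Walk v v), c.IsCycle ∧ ∀ w ∈ c.support, w ∈ S := by
  obtain ⟨u, hu, v, hv, huv, hnadj⟩ : ∃ u ∈ S, ∃ v ∈ S, u ≠ v ∧ ¬ Δ.Adj u v := by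
    by_contra hcon
    push Not at hcon
    exact hn fun a ha b hb hab => hcon a ha b hb hab
  -- Two distinct neighbours of `u`, joined by a path avoiding `u`.
  obtain ⟨a, z, rfl, hz, -, hzS, huz⟩ :=
    (hS.1 u hu v hv).exists_boundary (S := {u}) rfl (fun h => huv h.symm)
  have hzu : z ≠ a := huz.ne.symm
  have hzv : v ≠ z := fun h => hnadj (h ▸ huz)
  obtain ⟨b, z', hb, hz', -, hzS', huz'⟩ :=
    (hS.2 z hzS a hu v hv hzu.symm hzv).exists_boundary (S := {a}) rfl (fun h => huv h.symm)
  obtain rfl : b = a := hb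
  have hz'u : z' ≠ b := huz'.ne.symm
  obtain ⟨p, hp, hpS⟩ := (hS.2 b hu z hzS z' hzS'.1 hzu hz'u).exists_path
  have hbp : b ∉ p.support := fun h => (hpS b h).2 rfl
  refine ⟨b, .cons huz (p.concat huz'.symm), ?_, ?_⟩
  · rw [SimpleGraph.Walk.cons_isCycle_iff]
    refine ⟨hp.concat hbp huz'.symm, ?_⟩
    rw [SimpleGraph.Walk.edges_concat, List.concat_eq_append, List.mem_append]
    rintro (h | h)
    · exact hbp (p.fst_mem_support_of_mem_edges h)
    · have : s(b, z) = s(z', b) := by simpa using h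
      rw [Sym2.eq_iff] at this
      rcases this with ⟨h, -⟩ | ⟨-, h⟩
      · exact hz'u h.symm
      · exact hzS'.2 h.symm
  · intro w hw
    rw [SimpleGraph.Walk.support_cons, List.mem_cons, SimpleGraph.Walk.support_concat,
      List.mem_append] at hw
    rcases hw with rfl | hw | hw
    · exact hu
    · exact (hpS w hw).1
    · obtain rfl : w = b := by simpa using hw
      exact hu

/-- A chord would cut off a shorter cycle from a shortest one. -/
lemma mem_edges_of_minimal {V : Type} {Δ : SimpleGraph V} {S : Set V} {v : V} {c : Δ.Walk v v}
    (hc : c.IsCycle) (hcS : ∀ w ∈ c.support, w ∈ S)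
    (hmin : ∀ (u : V) (c' : Δ.Walk u u), c'.IsCycle → (∀ w ∈ c'.support, w ∈ S) →
      c.length ≤ c'.length) {x y : V} (hx : x ∈ c.support) (hy : y ∈ c.support)
    (hxy : Δ.Adj x y) : s(x, y) ∈ c.edges := by
  by_contra hne
  obtain ⟨q, r, hq, -, -, hlen, hs, he⟩ := hc.exists_arcs hx hy hxy.ne
  have hr2 : 2 ≤ r.length := by
    cases r with
    | nil => exact absurd rfl hxy.ne
    | cons h r' =>
      cases r' with
      | nil => exact absurd ((he _).2 (Or.inr (by simp [Sym2.eq_swap]))) hne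
      | cons h' r'' => simp
  have := hmin y (.cons hxy.symm q)
    ((SimpleGraph.Walk.cons_isCycle_iff _ _).2 ⟨hq, fun h => hne ((he _).2 (Or.inl (by
      rwa [Sym2.eq_swap])))⟩)
    (by
      intro w hw
      rw [SimpleGraph.Walk.support_cons, List.mem_cons] at hw
      rcases hw with rfl | hw
      exacts [hcS _ hy, hcS _ ((hs w).2 (Or.inl hw))])
  rw [SimpleGraph.Walk.length_cons] at this
  omega

lemma SimpleGraph.Walk.IsCycle.exists_third {V : Type} {Δ : SimpleGraph V} {v : V}
    {c : Δ.Walk v v} (hc : c.IsCycle) (x y : V) : ∃ z ∈ c.support, z ≠ x ∧ z ≠ y := by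
  classical
  by_contra hcon
  push Not at hcon
  have h3 := hc.three_le_length
  have hnd := hc.support_nodup
  have hsub : c.support.tail.toFinset ⊆ {x, y} := by
    intro w hw
    rw [List.mem_toFinset] at hw
    have := hcon w (List.mem_of_mem_tail hw)
    simp only [Finset.mem_insert, Finset.mem_singleton]
    tauto
  have h1 := (Finset.card_le_card hsub).trans Finset.card_le_two
  rw [List.toFinset_card_of_nodup hnd, List.length_tail, SimpleGraph.Walk.length_support] at h1
  omega

/-! ### The decomposition -/

/-- Decomposition of induced subgraphs. If `S` contains a triangle, split off a part of the
complement of a maximal clique; otherwise do so for a shortest cycle. -/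
lemma ThetaComplete.amalg {V : Type} [Finite V] {Δ : SimpleGraph V} (hΔ : ThetaComplete Δ)
    (S : Set V) (hS : NoCutVertexOn Δ S) :
    AmalgOfCompletesAndCycles Δ ((⊤ : Δ.Subgraph).induce S) := by
  induction S using WellFoundedLT.induction with
  | ind S ih =>
  by_cases hcl : Δ.IsClique S
  · exact .complete _ fun u hu v hv huv => ⟨hu, hv, hcl hu hv huv⟩
  by_cases htri : ∃ a ∈ S, ∃ b ∈ S, ∃ c ∈ S, Δ.Adj a b ∧ Δ.Adj a c ∧ Δ.Adj b c
  · obtain ⟨a, ha, b, hb, c, hc, hab, hac, hbc⟩ := htri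
    obtain ⟨X, hX0, hX⟩ := Finite.exists_le_maximal (p := fun X : Set V => X ⊆ S ∧ Δ.IsClique X)
      (a := {a, b, c}) ⟨by
        rintro w (rfl | rfl | rfl)
        exacts [ha, hb, hc], by
        rintro w (rfl | rfl | rfl) w' (rfl | rfl | rfl) hne <;>
          first
          | exact absurd rfl hne
          | assumption
          | (apply SimpleGraph.Adj.symm; assumption)⟩
    have haX : a ∈ X := hX0 (by simp)
    have hbX : b ∈ X := hX0 (by simp)
    have hcX : c ∈ X := hX0 (by simp)
    refine amalg_of_attachments hS (fun S' h => ih S' h) hX.prop.1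
      (fun h => hcl (h ▸ hX.prop.2)) ?_ ?_
    · intro x y
      by_contra hcon
      push Not at hcon
      have h1 := hcon a haX
      have h2 := hcon b hbX
      have h3 := hcon c hcX
      have := hab.ne
      have := hac.ne
      have := hbc.ne
      clear ih hX hX0
      by_cases a = x <;> by_cases b = x <;> by_cases c = x <;> simp_all
    · intro D hDX hD
      refine ⟨fun q₁ h₁ q₂ h₂ hne _ _ => hX.prop.2 h₁ h₂ hne, ?_⟩
      intro q₁ h₁ q₂ h₂ q₃ h₃ h12 h13 h23 e₁ e₂ e₃
      obtain ⟨d, hd, hdX⟩ := hΔ.exists_adj_clique hX.prop.2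
        (Set.disjoint_left.2 fun w hw => (hDX hw).2) hD h₁ h₂ h₃ h12 h13 h23 e₁ e₂ e₃
      have : insert d X ⊆ X := hX.le_of_ge
        ⟨Set.insert_subset (hDX hd).1 hX.prop.1, hX.prop.2.insert fun q hq _ => hdX q hq⟩
        (Set.subset_insert d X)
      exact (hDX hd).2 (this (Set.mem_insert d X))
  · have hex : ∃ n, ∃ (v : V) (c : Δ.Walk v v), c.IsCycle ∧ (∀ w ∈ c.support, w ∈ S) ∧
        c.length = n := by
      obtain ⟨v, c, hc, hcS⟩ := hS.exists_isCycle hcl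
      exact ⟨_, v, c, hc, hcS, rfl⟩
    classical
    obtain ⟨v, c, hc, hcS, hcn⟩ := Nat.find_spec hex
    have hmin : ∀ (u : V) (c' : Δ.Walk u u), c'.IsCycle → (∀ w ∈ c'.support, w ∈ S) →
        c.length ≤ c'.length := fun u c' hc' hS' =>
      hcn ▸ Nat.find_min' hex ⟨u, c', hc', hS', rfl⟩
    by_cases hXS : {w | w ∈ c.support} = S
    · refine .cycle _ v c hc (SimpleGraph.Subgraph.ext ?_ ?_)
      · simp [← hXS]
      · ext x y
        change (x ∈ S ∧ y ∈ S ∧ Δ.Adj x y) ↔ _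
        constructor
        · rintro ⟨hx, hy, hxy⟩
          rw [← hXS] at hx hy
          rw [SimpleGraph.Walk.adj_toSubgraph_iff_mem_edges]
          exact mem_edges_of_minimal hc hcS hmin hx hy hxy
        · intro h
          refine ⟨hcS x ?_, hcS y ?_, h.adj_sub⟩
          exacts [SimpleGraph.Walk.mem_support_of_adj_toSubgraph h,
            SimpleGraph.Walk.mem_support_of_adj_toSubgraph h.symm]
    · refine amalg_of_attachments hS (fun S' h => ih S' h) hcS hXS hc.exists_third ?_
      intro D hDX hD
      have hcD : ∀ w ∈ D, w ∉ c.support := fun w hw => (hDX hw).2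
      refine ⟨fun q₁ h₁ q₂ h₂ hne e₁ e₂ => hΔ.adj_of_isCycle hc hcD hD h₁ h₂ hne e₁ e₂, ?_⟩
      intro q₁ h₁ q₂ h₂ q₃ h₃ h12 h13 h23 e₁ e₂ e₃
      exact htri ⟨q₁, hcS _ h₁, q₂, hcS _ h₂, q₃, hcS _ h₃,
        hΔ.adj_of_isCycle hc hcD hD h₁ h₂ h12 e₁ e₂, hΔ.adj_of_isCycle hc hcD hD h₁ h₃ h13 e₁ e₃,
        hΔ.adj_of_isCycle hc hcD hD h₂ h₃ h23 e₂ e₃⟩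

lemma TwoConnectedSG.noCutVertexOn {V : Type} {Δ : SimpleGraph V} (h : TwoConnectedSG Δ) :
    NoCutVertexOn Δ Set.univ := by
  obtain ⟨h1, -, h2⟩ := h
  constructor
  · intro x _ y _
    obtain ⟨p⟩ := h1.preconnected x y
    exact ⟨p, fun _ _ => trivial⟩
  · intro z _ x _ y _ hx hy
    obtain ⟨p⟩ := (h2 z).preconnected ⟨x, by simpa using hx⟩ ⟨y, by simpa using hy⟩
    refine ⟨p.map (SimpleGraph.Subgraph.hom _), fun w hw => ?_⟩
    replace hw : w ∈ (p.map (SimpleGraph.Subgraph.hom _)).support := hw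
    rw [SimpleGraph.Walk.support_map, List.mem_map] at hw
    obtain ⟨a, -, rfl⟩ := hw
    simpa using a.2

/-- A finite simple 2-connected theta-complete graph is an edge
amalgamation of complete graphs and cycles, and conversely such amalgamations are
theta-complete. -/
theorem theta_complete_iff_amalg {V : Type} [Fintype V] (Δ : SimpleGraph V) :
    (TwoConnectedSG Δ → ThetaComplete Δ →
      AmalgOfCompletesAndCycles Δ (⊤ : Δ.Subgraph)) ∧
    (AmalgOfCompletesAndCycles Δ (⊤ : Δ.Subgraph) → ThetaComplete Δ) := by
  refine ⟨fun h2 hθ => ?_, fun h => h.thetaComplete⟩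
  have := hθ.amalg Set.univ h2.noCutVertexOn
  rwa [show (Set.univ : Set V) = (⊤ : Δ.Subgraph).verts from rfl,
    SimpleGraph.Subgraph.induce_self_verts] at this
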